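/- arXiv:1608.02406 — 3 statements merged into one kernel-verified Lean document; each statement's English description precedes it below -/
import Mathlib

section
/- Correctness of the exact bribery reduction (brave version): in the bribery construction with m < n, the following are equivalent: (i) there exists α : X → Bool such that ψ[α∪β] is true for every β : Y → Bool; (ii) there exists a profile J⃗' obtained from J⃗ = (J₁, J₂, J₃) by replacing at most one of its ballots by a rational ballot, such that some r* ∈ Kemeny(J⃗') sets the issue b_1 to true. -/
/-!
Constraint-based judgment aggregation: the bribery construction.
Issues are modelled as an inductive type, ballots as functions `Issue n m → Bool`,
the integrity constraint as a predicate on ballots, and the formula ψ as a Boolean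
function of the assignments to X and Y.
-/

namespace Brib

/-- The issues of the bribery construction. -/
inductive Issue (n m : ℕ) : Type
  | x : Fin n → Issue n m
  | x' : Fin n → Issue n m
  | z : Fin n → Issue n m
  | y : Fin m → Issue n m
  | y' : Fin m → Issue n m
  | t : Fin m → Issue n m
  | u : Fin 3 → Fin (10 * n + 10 * m + 10) → Issue n m
  | a : Issue n m
  | b : Fin (2 * m + 4) → Issue n m
  deriving DecidableEq, Fintype

variable {n m : ℕ}

/-- Hamming distance between two ballots: the number of issues on which they differ. -/
def hamming {I : Type*} [Fintype I] (r r' : I → Bool) : ℕ :=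
  (Finset.univ.filter (fun i => r i ≠ r' i)).card

/-- Weighted Hamming distance: the sum of the weights of the issues on which the
two ballots differ. -/
def whamming {I : Type*} [Fintype I] (w : I → ℕ) (r r' : I → Bool) : ℕ :=
  ∑ i ∈ Finset.univ.filter (fun i => r i ≠ r' i), w i

def bigA (r : Issue n m → Bool) : Prop := ∀ i, r (.x i) ≠ r (.x' i)
def bigZ (r : Issue n m → Bool) : Prop := ∀ i, r (.z i) = true
def bigB (r : Issue n m → Bool) : Prop := ∀ j, r (.y j) ≠ r (.y' j)
def bigT (r : Issue n m → Bool) : Prop := ∀ j, r (.t j) = true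
def bigC (r : Issue n m → Bool) : Prop := ∀ j, r (.b j) = true

/-- The part Γ₀ of the integrity constraint. -/
def gamma0 (psi : (Fin n → Bool) → (Fin m → Bool) → Bool) (r : Issue n m → Bool) : Prop :=
  (r .a = true ∨ bigC r) ∧ (r .a = true → ∀ j, r (.b j) = false) ∧
  (bigC r → r .a = false) ∧
  (bigA r ∨ bigZ r) ∧ (bigA r → ∀ i, r (.z i) = false) ∧
  Xor' (bigB r) (bigT r) ∧ (bigB r → ∀ j, r (.t j) = false) ∧
  (bigZ r → ∀ i, r (.x i) = false ∧ r (.x' i) = false) ∧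
  (bigT r → ∀ j, r (.y j) = false ∧ r (.y' j) = false) ∧
  (bigZ r → (r .a = true ∧ bigT r)) ∧
  ((bigA r ∧ bigB r) →
    (psi (fun i => r (.x i)) (fun j => r (.y j)) = false ∧ r .a = true)) ∧
  ((bigA r ∧ bigT r) → bigC r)

/-- A ballot is rational if it satisfies the integrity constraint
`Γ = Γ₀ ∨ ⋁_{i∈[3]} ⋀_{ℓ∈[u]} u_{i,ℓ}`. -/
def rational (psi : (Fin n → Bool) → (Fin m → Bool) → Bool) (r : Issue n m → Bool) : Prop :=
  gamma0 psi r ∨ ∃ i : Fin 3, ∀ ℓ, r (.u i ℓ) = true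

/-- The profile J⃗ = (J₁, J₂, J₃): the ballot J_{k+1} sets exactly the issues
u_{k+1,ℓ} to true. -/
def Jp (k : Fin 3) : Issue n m → Bool := fun i => match i with
  | .u k' _ => k' == k
  | _ => false

/-- The briber's desired ballot J₀: true exactly on the b- and u₁-issues. -/
def Jzero : Issue n m → Bool := fun i => match i with
  | .b _ => true
  | .u k _ => k == 0
  | _ => false

/-- The briber's weight function: weight 1 on each b-issue, weight 0 elsewhere. -/
def wt : Issue n m → ℕ := fun i => match i with
  | .b _ => 1
  | _ => 0

/-- Cumulative Hamming distance of a ballot to a profile of three ballots. -/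
def dist3 (r p1 p2 p3 : Issue n m → Bool) : ℕ :=
  hamming r p1 + hamming r p2 + hamming r p3

/-- Membership in the set of Kemeny outcomes of the profile (p1, p2, p3):
a rational ballot minimizing the cumulative Hamming distance among rational ballots. -/
def kemenyMem (psi : (Fin n → Bool) → (Fin m → Bool) → Bool)
    (p1 p2 p3 r : Issue n m → Bool) : Prop :=
  rational psi r ∧ ∀ r', rational psi r' → dist3 r p1 p2 p3 ≤ dist3 r' p1 p2 p3

end Brib

/-!
Up to a constant depending only on the profile, the cumulative distance of a ballot `r` is the sum,
over the issues `r` accepts, of the margin by which the profile rejects them. So Kemeny outcomes are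
the rational ballots of least total margin. When at most one ballot of `J⃗` is replaced, every
issue outside the `u`-issues has margin 1 or 3.

Ballots satisfying `Γ₀` are of three kinds, `Z ∧ T ∧ a`, `A ∧ B ∧ a ∧ ¬ψ` and `A ∧ T ∧ C`, and only
the last kind accepts `b`-issues.

From (i) to (ii), `J₁` is replaced by the ballot of the third kind that encodes `α` and rejects
all `u`-issues. Its total margin is `n + 3m + 4`. Against it, the first kind pays at least
`3n + m + 3`, which is no less because `m < n`. The second kind pays at least `n + 3m + 3`, and 2
more for a position where it differs from `α`, as `ψ` fails on it. An all-true block of `u`-issues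
is longer than `n + 3m + 4`.

From (ii) to (i), suppose that every `α` is refuted by some `β`. A ballot of the third kind can
trade its `t`- and `b`-issues, of total margin at least `m + (2m + 4)`, for `a` and an encoding of a
refuting `β`, of total margin at most `3 + 3m`. An accepted block of `u`-issues keeps a ballot
rational when a `b`-issue is dropped. So no Kemeny outcome accepts a `b`-issue.
-/

namespace Brib

section Margin

variable {κ I : Type*} [Fintype κ]

/-- The margin by which the profile `P` rejects the issue `i`: the number of ballots of `P`
rejecting `i` minus the number of those accepting it. -/
def margin (P : κ → I → Bool) (i : I) : ℤ :=
  ∑ k, if P k i then -1 else 1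

/-- The sum of the margins of the issues accepted by `r`; by `sum_hamming_eq` it is the cumulative
distance of `r` to `P` up to a constant. -/
def totalMargin [Fintype I] (P : κ → I → Bool) (r : I → Bool) : ℤ :=
  ∑ i, if r i then margin P i else 0

lemma margin_eq_card_sub (P : κ → I → Bool) (i : I) :
    margin P i = Fintype.card κ - 2 * (Finset.univ.filter fun k => P k i).card := by
  have h (k : κ) : (if P k i then -1 else 1 : ℤ) = 1 - 2 * if P k i then 1 else 0 := by
    split <;> rfl
  simp only [margin, h, Finset.sum_sub_distrib, ← Finset.mul_sum, Finset.sum_boole]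
  simp

lemma margin_le_card (P : κ → I → Bool) (i : I) : margin P i ≤ Fintype.card κ := by
  rw [margin_eq_card_sub]
  lia

variable [Fintype I]

lemma hamming_eq_sum_add_sum (r p : I → Bool) :
    (hamming r p : ℤ) =
      ∑ i, (if p i then 1 else 0) + ∑ i, if r i then (if p i then -1 else 1) else 0 := by
  rw [hamming, Finset.card_filter, Nat.cast_sum, ← Finset.sum_add_distrib]
  refine Finset.sum_congr rfl fun i _ => ?_
  cases r i <;> cases p i <;> rfl

lemma sum_hamming_eq (P : κ → I → Bool) (r : I → Bool) :
    ∑ k, (hamming r (P k) : ℤ) = ∑ k, ∑ i, (if P k i then 1 else 0) + totalMargin P r := by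
  simp only [hamming_eq_sum_add_sum, Finset.sum_add_distrib, totalMargin, margin]
  rw [Finset.sum_comm (f := fun k i => if r i then _ else _)]
  simp only [Finset.sum_ite_irrel, Finset.sum_const_zero]

lemma card_le_totalMargin_of_injective {ι : Type*} [Fintype ι] {P : κ → I → Bool}
    {r : I → Bool} {f : ι → I} (hP : ∀ i, 1 ≤ margin P i) (hf : Function.Injective f)
    (hr : ∀ j, r (f j) = true) :
    Fintype.card ι ≤ totalMargin P r := calc
  (Fintype.card ι : ℤ) ≤ ∑ j, margin P (f j) := by
    simpa using Finset.card_nsmul_le_sum Finset.univ _ 1 fun j _ => hP (f j)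
  _ = ∑ j, if r (f j) then margin P (f j) else 0 := by simp only [hr, if_true]
  _ = ∑ i ∈ Finset.univ.map ⟨f, hf⟩, if r i then margin P i else 0 := by simp
  _ ≤ totalMargin P r := by
    refine Finset.sum_le_univ_sum_of_nonneg fun i => ?_
    split
    · exact zero_le_one.trans (hP i)
    · rfl

lemma totalMargin_update_false_lt [DecidableEq I] {P : κ → I → Bool} {r : I → Bool} {i : I}
    (hr : r i = true) (hi : 0 < margin P i) :
    totalMargin P (Function.update r i false) < totalMargin P r := by
  refine Finset.sum_lt_sum (fun j _ => ?_) ⟨i, Finset.mem_univ i, by simpa [hr] using hi⟩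
  obtain rfl | hj := eq_or_ne j i
  · simpa [hr] using hi.le
  · simp [hj]

end Margin

variable {n m : ℕ} {psi : (Fin n → Bool) → (Fin m → Bool) → Bool} {r : Issue n m → Bool}

lemma sum_issue {M : Type*} [AddCommMonoid M] (f : Issue n m → M) :
    ∑ i, f i = ∑ i, f (.x i) + ∑ i, f (.x' i) + ∑ i, f (.z i) + ∑ j, f (.y j) + ∑ j, f (.y' j) +
      ∑ j, f (.t j) + ∑ k, ∑ l, f (.u k l) + f .a + ∑ j, f (.b j) := by
  rw [← (Issue.proxyTypeEquiv n m).sum_comp]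
  simp only [Fintype.sum_sum_type, Fintype.sum_sigma, Fintype.sum_unique, add_assoc]
  rfl

lemma kemenyMem_iff {P : Fin 3 → Issue n m → Bool} :
    kemenyMem psi (P 0) (P 1) (P 2) r ↔
      rational psi r ∧ ∀ r', rational psi r' → totalMargin P r ≤ totalMargin P r' := by
  have h : ∀ s, (dist3 s (P 0) (P 1) (P 2) : ℤ) =
      ∑ k, ∑ i, (if P k i then 1 else 0) + totalMargin P s := fun s => by
    rw [← sum_hamming_eq, Fin.sum_univ_three, dist3]
    push_cast
    rfl
  simp only [kemenyMem, ← Nat.cast_le (α := ℤ), h, add_le_add_iff_left]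

lemma gamma0_iff (hn : 0 < n) (hm : 0 < m) :
    gamma0 psi r ↔
      (bigZ r ∧ bigT r ∧ r .a = true ∧ (∀ i, r (.x i) = false ∧ r (.x' i) = false) ∧
        (∀ j, r (.y j) = false ∧ r (.y' j) = false) ∧ ∀ j, r (.b j) = false) ∨
      (bigA r ∧ bigB r ∧ r .a = true ∧ psi (fun i => r (.x i)) (fun j => r (.y j)) = false ∧
        (∀ i, r (.z i) = false) ∧ (∀ j, r (.t j) = false) ∧ ∀ j, r (.b j) = false) ∨
      (bigA r ∧ bigT r ∧ bigC r ∧ r .a = false ∧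
        (∀ i, r (.z i) = false) ∧ ∀ j, r (.y j) = false ∧ r (.y' j) = false) := by
  have hZ : bigZ r → ¬ ∀ i, r (.z i) = false := fun h h' => by simpa [h ⟨0, hn⟩] using h' ⟨0, hn⟩
  have hT : bigT r → ¬ ∀ j, r (.t j) = false := fun h h' => by simpa [h ⟨0, hm⟩] using h' ⟨0, hm⟩
  have hA : bigA r → ¬ ∀ i, r (.x i) = false ∧ r (.x' i) = false := fun h h' =>
    h ⟨0, hn⟩ ((h' _).1.trans (h' _).2.symm)
  have hB : bigB r → ¬ ∀ j, r (.y j) = false ∧ r (.y' j) = false := fun h h' =>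
    h ⟨0, hm⟩ ((h' _).1.trans (h' _).2.symm)
  have hC : bigC r → ¬ ∀ j, r (.b j) = false := fun h h' =>
    Bool.false_ne_true ((h' ⟨0, by lia⟩).symm.trans (h _))
  constructor
  · rintro ⟨-, hab, hCa, hAZ, hAz, ⟨hB', hT'⟩ | ⟨hT', -⟩, hBt, hZx, hTy, hZaT, hAB, hAT⟩
    · have hA' := hAZ.resolve_right fun h => hT' (hZaT h).2
      obtain ⟨hψ, ha⟩ := hAB ⟨hA', hB'⟩
      exact .inr (.inl ⟨hA', hB', ha, hψ, hAz hA', hBt hB', hab ha⟩)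
    · obtain hA' | hZ' := hAZ
      · have hC' := hAT ⟨hA', hT'⟩
        exact .inr (.inr ⟨hA', hT', hC', hCa hC', hAz hA', hTy hT'⟩)
      · have ha := (hZaT hZ').1
        exact .inl ⟨hZ', hT', ha, hZx hZ', hTy hT', hab ha⟩
  · rintro (⟨hZ', hT', ha, hx, hy, hb⟩ | ⟨hA', hB', ha, hψ, hz, ht, hb⟩ |
      ⟨hA', hT', hC', ha, hz, hy⟩)
    · have hA' : ¬ bigA r := fun h => hA h hx
      have hB' : ¬ bigB r := fun h => hB h hy
      exact ⟨.inl ha, fun _ => hb, fun h => absurd hb (hC h), .inr hZ', fun h => absurd h hA',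
        .inr ⟨hT', hB'⟩, fun h => absurd h hB', fun _ => hx, fun _ => hy, fun _ => ⟨ha, hT'⟩,
        fun h => absurd h.1 hA', fun h => absurd h.1 hA'⟩
    · have hZ' : ¬ bigZ r := fun h => hZ h hz
      have hT' : ¬ bigT r := fun h => hT h ht
      exact ⟨.inl ha, fun _ => hb, fun h => absurd hb (hC h), .inl hA', fun _ => hz,
        .inl ⟨hB', hT'⟩, fun _ => ht, fun h => absurd h hZ', fun h => absurd h hT',
        fun h => absurd h hZ', fun _ => ⟨hψ, ha⟩, fun h => absurd h.2 hT'⟩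
    · have hZ' : ¬ bigZ r := fun h => hZ h hz
      have hB' : ¬ bigB r := fun h => hB h hy
      exact ⟨.inr hC', fun h => by simp [ha] at h, fun _ => ha, .inl hA', fun _ => hz,
        .inr ⟨hT', hB'⟩, fun h => absurd h hB', fun h => absurd h hZ', fun _ => hy,
        fun h => absurd h hZ', fun h => absurd h.2 hB', fun _ => hC'⟩

lemma rational_Jp (k : Fin 3) : rational psi (Jp k) :=
  Or.inr ⟨k, fun _ => by simp [Jp]⟩

lemma Jp_eq_false (k : Fin 3) {i : Issue n m} (hi : ∀ k l, i ≠ .u k l) : Jp k i = false := by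
  cases i <;> first | rfl | exact absurd rfl (hi _ _)

section Bribe

/-- The ballot with which the briber replaces `J₁`: it encodes `α` on the issues `x_i, x'_i`, and
accepts all `t`- and `b`-issues. -/
def bribe (α : Fin n → Bool) : Issue n m → Bool
  | .x i => α i
  | .x' i => !α i
  | .t _ => true
  | .b _ => true
  | _ => false

/-- The profile `(bribe α, J₂, J₃)` with which the briber makes `bribe α` a Kemeny outcome. -/
def bribedProfile (α : Fin n → Bool) : Fin 3 → Issue n m → Bool :=
  Function.update Jp 0 (bribe α)

variable {α : Fin n → Bool}

lemma bigA_bribe : bigA (bribe (m := m) α) := fun i => by simp [bribe]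

lemma rational_bribe (hn : 0 < n) (hm : 0 < m) : rational psi (bribe α) :=
  Or.inl <| (gamma0_iff hn hm).2 <| Or.inr <| Or.inr
    ⟨bigA_bribe, fun _ => rfl, fun _ => rfl, rfl, fun _ => rfl, fun _ => ⟨rfl, rfl⟩⟩

lemma rational_bribedProfile (hn : 0 < n) (hm : 0 < m) (k : Fin 3) :
    rational psi (bribedProfile α k) := by
  obtain rfl | hk := eq_or_ne k 0
  · simpa [bribedProfile] using rational_bribe hn hm
  · simpa [bribedProfile, hk] using rational_Jp k

lemma card_bribedProfile_ne_Jp_le_one :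
    (Finset.univ.filter fun k => bribedProfile (m := m) α k ≠ Jp k).card ≤ 1 := by
  refine Finset.card_le_one_iff_subset_singleton.2 ⟨0, fun k hk => ?_⟩
  rw [Finset.mem_filter] at hk
  by_contra h
  exact hk.2 (Function.update_of_ne (by simpa using h) _ _)

lemma margin_bribedProfile (i : Issue n m) :
    margin (bribedProfile α) i = match i with
      | .x i => if α i then 1 else 3
      | .x' i => if α i then 3 else 1
      | .t _ | .b _ => 1
      | .u k _ => if k = 0 then 3 else 1
      | _ => 3 := by
  cases i with
  | x i | x' i => cases h : α i <;> simp [margin, Fin.sum_univ_three, bribedProfile, bribe, Jp, h]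
  | u k l => fin_cases k <;> rfl
  | _ => rfl

lemma one_le_margin_bribedProfile (i : Issue n m) : 1 ≤ margin (bribedProfile α) i := by
  rw [margin_bribedProfile]
  split <;> (try split) <;> norm_num

lemma totalMargin_bribedProfile :
    totalMargin (bribedProfile α) r =
      ∑ i, ((if r (.x i) then if α i then 1 else 3 else 0) +
        if r (.x' i) then if α i then 3 else 1 else 0) +
      ∑ i, (if r (.z i) then 3 else 0) +
      ∑ j, ((if r (.y j) then 3 else 0) + if r (.y' j) then 3 else 0) +
      ∑ j, (if r (.t j) then 1 else 0) +
      ∑ k, ∑ l, (if r (.u k l) then if k = 0 then 3 else 1 else 0) +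
      (if r .a then 3 else 0) + ∑ j, if r (.b j) then 1 else 0 := by
  simp only [totalMargin, sum_issue, margin_bribedProfile, Finset.sum_add_distrib]
  ring

lemma sum_margin_x_of_bigA (hA : bigA r) :
    ∑ i, ((if r (.x i) then if α i then 1 else 3 else 0) +
      if r (.x' i) then if α i then 3 else 1 else 0) =
      (n + 2 * (Finset.univ.filter fun i => r (.x i) ≠ α i).card : ℤ) := by
  have hx (i : Fin n) : ((if r (.x i) then if α i then 1 else 3 else 0) +
      if r (.x' i) then if α i then 3 else 1 else 0 : ℤ) =
        1 + 2 * if r (.x i) ≠ α i then 1 else 0 := by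
    have hne := hA i
    revert hne
    cases r (.x i) <;> cases r (.x' i) <;> cases α i <;> simp
  simp only [hx, Finset.sum_add_distrib, ← Finset.mul_sum, Finset.sum_boole]
  simp

lemma totalMargin_bribe : totalMargin (bribedProfile (m := m) α) (bribe α) = n + 3 * m + 4 := by
  have hd : (Finset.univ.filter fun i => bribe (m := m) α (.x i) ≠ α i) = ∅ := by simp [bribe]
  rw [totalMargin_bribedProfile, sum_margin_x_of_bigA bigA_bribe, hd]
  simp only [bribe, Finset.card_empty, Bool.false_eq_true, if_true, if_false, add_zero,
    Finset.sum_const, smul_zero, Finset.card_univ, Fintype.card_fin, nsmul_eq_mul]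
  push_cast
  ring

lemma le_totalMargin_bribedProfile_of_gamma0 (hm : 0 < m) (hmn : m < n)
    (hα : ∀ β, psi α β = true) (hr : gamma0 psi r) :
    n + 3 * m + 4 ≤ totalMargin (bribedProfile α) r := by
  have hu : 0 ≤ ∑ k, ∑ l, (if r (.u k l) then if k = 0 then 3 else 1 else 0 : ℤ) := by positivity
  rw [totalMargin_bribedProfile]
  obtain ⟨hZ, hT, ha, hx, hy, hb⟩ | ⟨hA, hB, ha, hψ, hz, ht, hb⟩ | ⟨hA, hT, hC, ha, hz, hy⟩ :=
    (gamma0_iff hmn.pos hm).1 hr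
  · simp only [hZ _, hT _, ha, hx, hy, hb, Bool.false_eq_true, if_true, if_false, add_zero,
      Finset.sum_const, smul_zero, Finset.card_univ, Fintype.card_fin, nsmul_eq_mul]
    lia
  · have hy (j : Fin m) : ((if r (.y j) then 3 else 0) + if r (.y' j) then 3 else 0 : ℤ) = 3 := by
      have hne := hB j
      revert hne
      cases r (.y j) <;> cases r (.y' j) <;> simp
    have hd : 0 < (Finset.univ.filter fun i => r (.x i) ≠ α i).card := by
      obtain ⟨i, hi⟩ : ∃ i, r (.x i) ≠ α i := Function.ne_iff.1 fun h => by simp [h, hα] at hψ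
      exact Finset.card_pos.2 ⟨i, by simpa using hi⟩
    rw [sum_margin_x_of_bigA hA]
    simp only [hy, hz, ht, ha, hb, Bool.false_eq_true, if_true, if_false, Finset.sum_const,
      smul_zero, Finset.card_univ, Fintype.card_fin, nsmul_eq_mul]
    lia
  · rw [sum_margin_x_of_bigA hA]
    simp only [hT _, hC _, hz, hy, ha, Bool.false_eq_true, if_true, if_false, add_zero,
      Finset.sum_const, smul_zero, Finset.card_univ, Fintype.card_fin, nsmul_eq_mul, Nat.cast_add,
      Nat.cast_mul, Nat.cast_ofNat]
    lia

lemma le_totalMargin_bribedProfile_of_forall_u {k : Fin 3} (hk : ∀ l, r (.u k l) = true) :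
    n + 3 * m + 4 ≤ totalMargin (bribedProfile α) r := by
  have hinj : Function.Injective (Issue.u (n := n) (m := m) k) := fun l l' h => by simpa using h
  have h := card_le_totalMargin_of_injective (one_le_margin_bribedProfile (α := α)) hinj hk
  rw [Fintype.card_fin] at h
  lia

lemma kemenyMem_bribe (hm : 0 < m) (hmn : m < n) (hα : ∀ β, psi α β = true) :
    kemenyMem psi (bribedProfile α 0) (bribedProfile α 1) (bribedProfile α 2) (bribe α) := by
  refine kemenyMem_iff.2 ⟨rational_bribe hmn.pos hm, fun r hr => totalMargin_bribe.trans_le ?_⟩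
  obtain hr | ⟨k, hk⟩ := hr
  · exact le_totalMargin_bribedProfile_of_gamma0 hm hmn hα hr
  · exact le_totalMargin_bribedProfile_of_forall_u hk

end Bribe

section Refute

/-- The modification of the ballot `r` that trades its `t`- and `b`-issues for `a` and an encoding
of `β` on the issues `y_j, y'_j`. -/
def refute (β : Fin m → Bool) (r : Issue n m → Bool) : Issue n m → Bool
  | .x i => r (.x i)
  | .x' i => r (.x' i)
  | .y j => β j
  | .y' j => !β j
  | .u k l => r (.u k l)
  | .a => true
  | _ => false

variable {P : Fin 3 → Issue n m → Bool} {β : Fin m → Bool}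

lemma gamma0_refute (hn : 0 < n) (hm : 0 < m) (hA : bigA r)
    (hβ : psi (fun i => r (.x i)) β = false) : gamma0 psi (refute β r) :=
  (gamma0_iff hn hm).2 <| .inr <| .inl
    ⟨hA, fun j => by simp [refute], rfl, hβ, fun _ => rfl, fun _ => rfl, fun _ => rfl⟩

lemma one_le_margin_of_card_ne_Jp_le_one
    (hP : (Finset.univ.filter fun k => P k ≠ Jp k).card ≤ 1)
    {i : Issue n m} (hi : ∀ k l, i ≠ .u k l) : 1 ≤ margin P i := by
  have hsub : (Finset.univ.filter fun k => P k i) ⊆ Finset.univ.filter fun k => P k ≠ Jp k :=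
    Finset.monotone_filter_right _ fun k _ hk h => by simp [h, Jp_eq_false k hi] at hk
  have hcard := (Finset.card_le_card hsub).trans hP
  rw [margin_eq_card_sub, Fintype.card_fin]
  lia

lemma totalMargin_refute :
    totalMargin P (refute β r) = ∑ i, (if r (.x i) then margin P (.x i) else 0) +
      ∑ i, (if r (.x' i) then margin P (.x' i) else 0) +
      ∑ j, ((if β j then margin P (.y j) else 0) + if !β j then margin P (.y' j) else 0) +
      ∑ k, ∑ l, (if r (.u k l) then margin P (.u k l) else 0) + margin P .a := by
  simp only [totalMargin, sum_issue, refute, if_true, Bool.false_eq_true, if_false,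
    Finset.sum_const_zero, Finset.sum_add_distrib, add_zero, add_assoc]
  rfl

lemma totalMargin_refute_lt (hP : ∀ i, (∀ k l, i ≠ .u k l) → 1 ≤ margin P i)
    (hT : bigT r) (hC : bigC r) (ha : r .a = false) (hz : ∀ i, r (.z i) = false)
    (hy : ∀ j, r (.y j) = false ∧ r (.y' j) = false) :
    totalMargin P (refute β r) < totalMargin P r := by
  have hle (i : Issue n m) : margin P i ≤ 3 := margin_le_card P i
  have hysum : ∑ j, ((if β j then margin P (.y j) else 0) +
      if !β j then margin P (.y' j) else 0) ≤ m * 3 := by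
    refine (Finset.sum_le_card_nsmul _ _ 3 fun j _ => ?_).trans_eq (by simp)
    cases β j <;> simp [hle]
  have htsum : m * 1 ≤ ∑ j, margin P (.t j) := by
    simpa using Finset.card_nsmul_le_sum Finset.univ _ 1 fun j _ => hP (.t j) (by simp)
  have hbsum : (2 * m + 4) * 1 ≤ ∑ j, margin P (.b j) := by
    simpa using Finset.card_nsmul_le_sum Finset.univ _ 1 fun j _ => hP (.b j) (by simp)
  have hr_sum : totalMargin P r = ∑ i, (if r (.x i) then margin P (.x i) else 0) +
      ∑ i, (if r (.x' i) then margin P (.x' i) else 0) + ∑ j, margin P (.t j) +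
      ∑ k, ∑ l, (if r (.u k l) then margin P (.u k l) else 0) + ∑ j, margin P (.b j) := by
    simp [totalMargin, sum_issue, hT _, hC _, ha, hz, hy]
  rw [totalMargin_refute, hr_sum]
  linarith [hle .a]

lemma kemenyMem.apply_b_eq_false (hr : kemenyMem psi (P 0) (P 1) (P 2) r) (hn : 0 < n)
    (hm : 0 < m) (hψ : ∀ α, ∃ β, psi α β = false)
    (hP : ∀ i, (∀ k l, i ≠ .u k l) → 1 ≤ margin P i) (j : Fin (2 * m + 4)) :
    r (.b j) = false := by
  obtain ⟨hg | ⟨k, hk⟩, hmin⟩ := kemenyMem_iff.1 hr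
  · obtain ⟨-, -, -, -, -, hb⟩ | ⟨-, -, -, -, -, -, hb⟩ | ⟨hA, hT, hC, ha, hz, hy⟩ :=
      (gamma0_iff hn hm).1 hg
    · exact hb j
    · exact hb j
    · obtain ⟨β, hβ⟩ := hψ fun i => r (.x i)
      exact absurd (hmin _ (.inl (gamma0_refute hn hm hA hβ)))
        (totalMargin_refute_lt hP hT hC ha hz hy).not_ge
  · by_contra hb
    have hlt := totalMargin_update_false_lt (by simpa using hb) (hP (.b j) (by simp))
    exact hlt.not_ge (hmin _ (.inr ⟨k, fun l => by simp [hk]⟩))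

end Refute

end Brib

open Brib in
/-- correctness of the brave exact bribery reduction: with m < n,
there exists α with ψ[α∪β] true for every β
iff
one can replace at most one ballot of J⃗ = (J₁, J₂, J₃) by a rational ballot, obtaining
a profile J⃗', such that some Kemeny outcome of J⃗' sets the issue b₁ to true. -/
theorem brib_exact_reduction_correct_brave (n m : ℕ) (hn : 0 < n) (hm : 0 < m)
    (hmn : m < n)
    (psi : (Fin n → Bool) → (Fin m → Bool) → Bool) :
    (∃ α : Fin n → Bool, ∀ β : Fin m → Bool, psi α β = true) ↔
    (∃ J' : Fin 3 → Issue n m → Bool,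
      (∀ k, rational psi (J' k)) ∧
      (Finset.univ.filter (fun k : Fin 3 => J' k ≠ Jp k)).card ≤ 1 ∧
      (∃ r : Issue n m → Bool, kemenyMem psi (J' 0) (J' 1) (J' 2) r ∧
        r (.b ⟨0, by omega⟩) = true)) := by
  constructor
  · rintro ⟨α, hα⟩
    exact ⟨bribedProfile α, rational_bribedProfile hn hm, card_bribedProfile_ne_Jp_le_one,
      bribe α, kemenyMem_bribe hm hmn hα, rfl⟩
  · rintro ⟨J', -, hJ', r, hr, hb⟩
    by_contra! hψ
    have hb' := hr.apply_b_eq_false hn hm (by simpa using hψ)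
      (fun _ => one_le_margin_of_card_ne_Jp_le_one hJ') ⟨0, by omega⟩
    exact Bool.false_ne_true (hb'.symm.trans hb)
end

section
/- In the bribery construction, for every rational ballot r and every rational ballot E such that E sets all issues u_{i,ℓ} (ℓ ∈ [u]) to true for some i ∈ [3] and E sets at least one issue b_j to true, E is not a Kemeny outcome of the profile (r, J₂, J₃): the ballot E' obtained from E by setting every b_j to false is rational and satisfies Dist(E', (r, J₂, J₃)) < Dist(E, (r, J₂, J₃)). -/
/-!
The ballot E' obtained by clearing the b-issues of E lies between E and every ballot rejecting all
b-issues, in the sense that the triangle inequality through E' is an equality. Moving from E to E'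
therefore shortens the distances to J₂ and to J₃ by exactly d(E, E') each, and by the triangle
inequality lengthens the distance to r by at most d(E, E'). So the cumulative distance drops by at
least d(E, E') > 0, and E' is rational because a complete u-row of E survives in it.
-/

/-!
Constraint-based judgment aggregation: the bribery construction.
Issues are modelled as an inductive type, ballots as functions `Issue n m → Bool`,
the integrity constraint as a predicate on ballots, and the formula ψ as a Boolean
function of the assignments to X and Y.
-/

namespace Brib

variable {n m : ℕ}

/-- The ballot obtained from `E` by setting every b-issue to false. -/
def clearB (E : Issue n m → Bool) : Issue n m → Bool := fun i => match i with
  | .b _ => false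
  | i => E i

end Brib

namespace Brib

theorem hammingDist_add_hammingDist_of_between {ι : Type*} {β : ι → Type*} [Fintype ι]
    [∀ i, DecidableEq (β i)] {f g h : ∀ i, β i} (hg : ∀ i, g i = f i ∨ g i = h i) :
    hammingDist f g + hammingDist g h = hammingDist f h := by
  simp only [hammingDist, Finset.card_filter, ← Finset.sum_add_distrib]
  refine Finset.sum_congr rfl fun i _ => ?_
  rcases hg i with hi | hi <;> simp [hi]

theorem hamming_eq_hammingDist {I : Type*} [Fintype I] (r r' : I → Bool) :
    hamming r r' = hammingDist r r' :=
  rfl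

variable {n m : ℕ} {E E' p q : Issue n m → Bool}

theorem dist3_lt_dist3_of_between (r : Issue n m → Bool) (hne : E' ≠ E)
    (hp : ∀ i, E' i = E i ∨ E' i = p i) (hq : ∀ i, E' i = E i ∨ E' i = q i) :
    dist3 E' r p q < dist3 E r p q := by
  have closer_p : hammingDist E E' + hammingDist E' p = hammingDist E p :=
    hammingDist_add_hammingDist_of_between hp
  have closer_q : hammingDist E E' + hammingDist E' q = hammingDist E q :=
    hammingDist_add_hammingDist_of_between hq
  have triangle_r : hammingDist E' r ≤ hammingDist E E' + hammingDist E r :=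
    hammingDist_triangle_left E' r E
  have moved : 0 < hammingDist E E' := hammingDist_pos.mpr hne.symm
  simp only [dist3, hamming_eq_hammingDist]
  omega

theorem clearB_eq_or_eq (E : Issue n m → Bool) (hp : ∀ j, p (.b j) = false) (i : Issue n m) :
    clearB E i = E i ∨ clearB E i = p i := by
  cases i with
  | b j => exact .inr (hp j).symm
  | _ => exact .inl rfl

theorem clearB_ne_self (hb : ∃ j, E (.b j) = true) : clearB E ≠ E := by
  obtain ⟨j, hj⟩ := hb
  intro h
  exact Bool.false_ne_true ((congrFun h (.b j)).trans hj)

theorem rational_clearB (psi : (Fin n → Bool) → (Fin m → Bool) → Bool)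
    (hu : ∃ i : Fin 3, ∀ ℓ, E (.u i ℓ) = true) : rational psi (clearB E) :=
  .inr hu

end Brib

open Brib in
theorem brib_clearB_improves_general {n m : ℕ}
    (psi : (Fin n → Bool) → (Fin m → Bool) → Bool) (r : Issue n m → Bool)
    {p q E : Issue n m → Bool} (hp : ∀ j, p (.b j) = false) (hq : ∀ j, q (.b j) = false)
    (hu : ∃ i : Fin 3, ∀ ℓ, E (.u i ℓ) = true) (hb : ∃ j, E (.b j) = true) :
    rational psi (clearB E) ∧
    dist3 (clearB E) r p q < dist3 E r p q ∧
    ¬ kemenyMem psi r p q E := by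
  have rat : rational psi (clearB E) := rational_clearB psi hu
  have closer : dist3 (clearB E) r p q < dist3 E r p q :=
    dist3_lt_dist3_of_between r (clearB_ne_self hb) (clearB_eq_or_eq E hp) (clearB_eq_or_eq E hq)
  exact ⟨rat, closer, fun kemeny => (kemeny.2 _ rat).not_gt closer⟩

open Brib in
/-- for every rational ballot r and every rational ballot E that sets
some complete u-row to true and at least one b-issue to true, E is not a Kemeny
outcome of (r, J₂, J₃): the ballot E' obtained from E by setting every b-issue to
false is rational and strictly closer (cumulatively) to the profile. -/
theorem brib_clearB_improves (n m : ℕ) (hn : 0 < n) (hm : 0 < m)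
    (psi : (Fin n → Bool) → (Fin m → Bool) → Bool)
    (r : Issue n m → Bool) (hr : rational psi r)
    (E : Issue n m → Bool) (hE : rational psi E)
    (hu : ∃ i : Fin 3, ∀ ℓ, E (.u i ℓ) = true)
    (hb : ∃ j, E (.b j) = true) :
    rational psi (clearB E) ∧
    dist3 (clearB E) r (Jp 1) (Jp 2) < dist3 E r (Jp 1) (Jp 2) ∧
    ¬ kemenyMem psi r (Jp 1) (Jp 2) E :=
  brib_clearB_improves_general psi r (fun _ => rfl) (fun _ => rfl) hu hb
end

section
/- In the control construction, the Kemeny outcomes of the restricted profile on the initial subagenda Φ' are exactly Kemeny(J⃗|_{Φ'}) = {J*_{old,0}} ∪ {J*_{old,β} : β : Y → Bool}, each of these ballots has cumulative Hamming distance 3m + 2 + 3u to J⃗|_{Φ'}, and every Kemeny outcome of J⃗|_{Φ'} sets the issue b to false. -/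
/-!
Extended constraint-based judgment aggregation: the control construction.
The full set Φ of issues is an inductive type; subagendas are `Finset`s of issues;
a ballot on a subagenda Ψ is a function `↥Ψ → Bool`, and it is rational if it extends
to a ballot on all of Φ satisfying the integrity constraint Γ.
-/

namespace Ctrl

/-- The full set Φ of issues of the control construction. -/
inductive Issue (n m : ℕ) : Type
  | x : Fin n → Issue n m
  | x' : Fin n → Issue n m
  | y : Fin m → Issue n m
  | y' : Fin m → Issue n m
  | t : Fin m → Issue n m
  | a : Issue n m
  | b : Issue n m
  | u : Fin 3 → Fin (10 * n + 10 * m + 10) → Issue n m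
  deriving DecidableEq, Fintype

variable {n m : ℕ}

/-- Hamming distance between two ballots on a (sub)agenda. -/
def hamming {I : Type*} [Fintype I] (r r' : I → Bool) : ℕ :=
  (Finset.univ.filter (fun i => r i ≠ r' i)).card

def bigA (r : Issue n m → Bool) : Prop := ∀ i, r (.x i) ≠ r (.x' i)
def bigB (r : Issue n m → Bool) : Prop := ∀ j, r (.y j) ≠ r (.y' j)
def bigT (r : Issue n m → Bool) : Prop := ∀ j, r (.t j) = true

/-- The part Γ₀ of the integrity constraint. -/
def gamma0 (psi : (Fin n → Bool) → (Fin m → Bool) → Bool) (r : Issue n m → Bool) : Prop :=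
  (r .a = true ∨ r .b = true) ∧ (r .a = false ∨ r .b = false) ∧
  (bigB r ∨ bigT r) ∧
  (bigA r →
    ((bigB r ∧ r .a = true ∧ psi (fun i => r (.x i)) (fun j => r (.y j)) = false) ∨
     (r .b = true ∧ ∀ j, r (.t j) = true ∧ r (.y j) = false ∧ r (.y' j) = false)))

/-- The integrity constraint `Γ = Γ₀ ∨ ⋁_{i∈[3]} ⋀_{ℓ∈[u]} u_{i,ℓ}` on full ballots. -/
def Gamma (psi : (Fin n → Bool) → (Fin m → Bool) → Bool) (r : Issue n m → Bool) : Prop :=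
  gamma0 psi r ∨ ∃ i : Fin 3, ∀ ℓ, r (.u i ℓ) = true

/-- A ballot on a subagenda Ψ is rational if it extends to a truth assignment of all
of Φ that satisfies Γ. -/
def rationalOn (psi : (Fin n → Bool) → (Fin m → Bool) → Bool)
    (Ψ : Finset (Issue n m)) (r : ↥Ψ → Bool) : Prop :=
  ∃ r' : Issue n m → Bool, (∀ i : ↥Ψ, r' i.1 = r i) ∧ Gamma psi r'

/-- The restriction of a full ballot to a subagenda Ψ. -/
def restrict (Ψ : Finset (Issue n m)) (J : Issue n m → Bool) : ↥Ψ → Bool :=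
  fun i => J i.1

/-- The profile J⃗ = (J₁, J₂, J₃): the ballot J_{k+1} sets all x- and x'-issues and
the issues u_{k+1,ℓ} to true, J₃ additionally sets a to true, and all other issues
are set to false. -/
def Jp (k : Fin 3) : Issue n m → Bool := fun i => match i with
  | .x _ => true
  | .x' _ => true
  | .u k' _ => k' == k
  | .a => k == 2
  | _ => false

/-- Cumulative Hamming distance of a ballot on a subagenda Ψ to the restricted
profile J⃗|_Ψ. -/
def DistOn (Ψ : Finset (Issue n m)) (r : ↥Ψ → Bool) : ℕ :=
  hamming r (restrict Ψ (Jp 0)) + hamming r (restrict Ψ (Jp 1)) +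
    hamming r (restrict Ψ (Jp 2))

/-- Membership in the set of Kemeny outcomes of the restricted profile J⃗|_Ψ:
a rational ballot on Ψ minimizing the cumulative Hamming distance to J⃗|_Ψ among
all rational ballots on Ψ. -/
def kemenyOn (psi : (Fin n → Bool) → (Fin m → Bool) → Bool)
    (Ψ : Finset (Issue n m)) (r : ↥Ψ → Bool) : Prop :=
  rationalOn psi Ψ r ∧ ∀ r' : ↥Ψ → Bool, rationalOn psi Ψ r' → DistOn Ψ r ≤ DistOn Ψ r'

/-- Indicator of membership in the initial subagenda Φ': all issues except the
x- and x'-issues. -/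
def inPhi' : Issue n m → Bool := fun i => match i with
  | .x _ => false
  | .x' _ => false
  | _ => true

/-- The initial subagenda Φ'. -/
def Phi' (n m : ℕ) : Finset (Issue n m) :=
  Finset.univ.filter (fun i => inPhi' i = true)

theorem b_mem_Phi' : (Issue.b : Issue n m) ∈ Phi' n m :=
  Finset.mem_filter.mpr ⟨Finset.mem_univ _, rfl⟩

/-- The ballot J*_{old,0} on Φ': true exactly on the t-issues and a. -/
def JoldZero : ↥(Phi' n m) → Bool := fun i => match i.1 with
  | .t _ => true
  | .a => true
  | _ => false

/-- The ballot J*_{old,β} on Φ': y_j ↦ β(y_j), y'_j ↦ ¬β(y_j), a true,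
every other issue of Φ' false. -/
def JoldBeta (β : Fin m → Bool) : ↥(Phi' n m) → Bool := fun i => match i.1 with
  | .y j => β j
  | .y' j => !(β j)
  | .a => true
  | _ => false

end Ctrl

/-!
The cumulative distance is a sum over issues of the number of dissenting judges. Accepting `y_j`,
`y'_j`, `t_j` or `b`, which all three judges reject, costs `3`; accepting `a` or `u_{k,ℓ}`, which
exactly one judge accepts, costs `2` instead of `1`.

For `n > 0`, accepting all `x_i` and `x'_i` falsifies the premise `⋀ (x_i ⊕ x'_i)`, so on `Φ'` the
constraint `Γ₀` only says that exactly one of `a`, `b` holds and that `⋀ (y_j ⊕ y'_j)` or `⋀ t_j`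
holds, independently of `ψ`. The cheapest way to satisfy it takes `a` and exactly one of `y_j`,
`y'_j`, `t_j` for every `j`, and the disjunction leaves only the named ballots. Accepting a whole
block `u_{k,·}` instead adds `u` to the unavoidable `3u`, which exceeds the cost `3m + 2` of all
the rest.
-/

namespace Ctrl

section Subagenda

variable {Ψ : Finset (Issue n m)} {psi : (Fin n → Bool) → (Fin m → Bool) → Bool}

theorem restrict_surjective (Ψ : Finset (Issue n m)) : Function.Surjective (restrict Ψ) :=
  fun r => ⟨fun i => if h : i ∈ Ψ then r ⟨i, h⟩ else false, by funext i; simp [restrict]⟩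

theorem rationalOn_iff_exists_restrict_eq {r : ↥Ψ → Bool} :
    rationalOn psi Ψ r ↔ ∃ R, restrict Ψ R = r ∧ Gamma psi R :=
  exists_congr fun _ => and_congr_left fun _ => funext_iff.symm

theorem kemenyOn_iff_distOn_eq {r s : ↥Ψ → Bool} (hs : kemenyOn psi Ψ s) :
    kemenyOn psi Ψ r ↔ rationalOn psi Ψ r ∧ DistOn Ψ r = DistOn Ψ s :=
  ⟨fun hr => ⟨hr.1, le_antisymm (hr.2 s hs.1) (hs.2 r hr.1)⟩,
    fun ⟨hr, hrs⟩ => ⟨hr, fun r' hr' => hrs.trans_le (hs.2 r' hr')⟩⟩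

/-- The number of judges of the profile whose judgment on the issue `i` differs from `c`. -/
def dissent (i : Issue n m) (c : Bool) : ℕ :=
  hamming (fun _ => c) fun k : Fin 3 => Jp k i

theorem distOn_restrict (R : Issue n m → Bool) :
    DistOn Ψ (restrict Ψ R) = ∑ i ∈ Ψ, dissent i (R i) := by
  rw [← Finset.sum_coe_sort Ψ fun i => dissent i (R i)]
  simp only [DistOn, hamming, dissent, Finset.card_filter, Fin.sum_univ_three,
    Finset.sum_add_distrib]
  rfl

end Subagenda

theorem dissent_y (j : Fin m) (c : Bool) : dissent (.y j : Issue n m) c = 3 * c.toNat := by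
  cases c <;> rfl

theorem dissent_y' (j : Fin m) (c : Bool) : dissent (.y' j : Issue n m) c = 3 * c.toNat := by
  cases c <;> rfl

theorem dissent_t (j : Fin m) (c : Bool) : dissent (.t j : Issue n m) c = 3 * c.toNat := by
  cases c <;> rfl

theorem dissent_a (c : Bool) : dissent (.a : Issue n m) c = 1 + c.toNat := by
  cases c <;> rfl

theorem dissent_b (c : Bool) : dissent (.b : Issue n m) c = 3 * c.toNat := by
  cases c <;> rfl

theorem dissent_u (k : Fin 3) (l : Fin (10 * n + 10 * m + 10)) (c : Bool) :
    dissent (.u k l : Issue n m) c = 1 + c.toNat := by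
  fin_cases k <;> cases c <;> rfl

/-- The issues as a sum type, with the constructors in their order of declaration; it turns sums
over issues into iterated sums. -/
def issueEquiv (n m : ℕ) :
    Fin n ⊕ Fin n ⊕ Fin m ⊕ Fin m ⊕ Fin m ⊕ Unit ⊕ Unit ⊕ Fin 3 × Fin (10 * n + 10 * m + 10) ≃
      Issue n m where
  toFun
    | .inl i => .x i
    | .inr (.inl i) => .x' i
    | .inr (.inr (.inl j)) => .y j
    | .inr (.inr (.inr (.inl j))) => .y' j
    | .inr (.inr (.inr (.inr (.inl j)))) => .t j
    | .inr (.inr (.inr (.inr (.inr (.inl _))))) => .a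
    | .inr (.inr (.inr (.inr (.inr (.inr (.inl _)))))) => .b
    | .inr (.inr (.inr (.inr (.inr (.inr (.inr (k, l))))))) => .u k l
  invFun
    | .x i => .inl i
    | .x' i => .inr (.inl i)
    | .y j => .inr (.inr (.inl j))
    | .y' j => .inr (.inr (.inr (.inl j)))
    | .t j => .inr (.inr (.inr (.inr (.inl j))))
    | .a => .inr (.inr (.inr (.inr (.inr (.inl ())))))
    | .b => .inr (.inr (.inr (.inr (.inr (.inr (.inl ()))))))
    | .u k l => .inr (.inr (.inr (.inr (.inr (.inr (.inr (k, l)))))))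
  left_inv := by rintro (_ | _ | _ | _ | _ | _ | _ | _) <;> rfl
  right_inv := by rintro (_ | _) <;> rfl

theorem mem_Phi' {i : Issue n m} : i ∈ Phi' n m ↔ inPhi' i = true := by
  simp [Phi']

theorem sum_Phi' {M : Type*} [AddCommMonoid M] (f : Issue n m → M) :
    ∑ i ∈ Phi' n m, f i =
      ∑ j, (f (.y j) + f (.y' j) + f (.t j)) + (f .a + f .b) + ∑ k, ∑ l, f (.u k l) := by
  rw [Phi', Finset.sum_filter, ← (issueEquiv n m).sum_comp]
  simp [issueEquiv, inPhi', Fintype.sum_prod_type, Finset.sum_add_distrib, add_assoc]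

theorem restrict_Phi'_eq_iff {R : Issue n m → Bool} {r : ↥(Phi' n m) → Bool} :
    restrict (Phi' n m) R = r ↔
      (∀ j, R (.y j) = r ⟨.y j, mem_Phi'.mpr rfl⟩ ∧ R (.y' j) = r ⟨.y' j, mem_Phi'.mpr rfl⟩ ∧
        R (.t j) = r ⟨.t j, mem_Phi'.mpr rfl⟩) ∧
      R .a = r ⟨.a, mem_Phi'.mpr rfl⟩ ∧ R .b = r ⟨.b, mem_Phi'.mpr rfl⟩ ∧
      ∀ k l, R (.u k l) = r ⟨.u k l, mem_Phi'.mpr rfl⟩ := by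
  constructor
  · rintro rfl
    exact ⟨fun _ => ⟨rfl, rfl, rfl⟩, rfl, rfl, fun _ _ => rfl⟩
  · rintro ⟨hj, ha, hb, hu⟩
    funext ⟨i, hi⟩
    cases i with
    | x i => exact absurd (mem_Phi'.mp hi) Bool.false_ne_true
    | x' i => exact absurd (mem_Phi'.mp hi) Bool.false_ne_true
    | y j => exact (hj j).1
    | y' j => exact (hj j).2.1
    | t j => exact (hj j).2.2
    | a => exact ha
    | b => exact hb
    | u k l => exact hu k l

/-- The part of `gamma0` that constrains the issues of `Φ'` when the premise `bigA` fails. -/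
def projectedGamma0 (R : Issue n m → Bool) : Prop :=
  R .a ≠ R .b ∧ (bigB R ∨ bigT R)

/-- The integrity constraint that `Γ` induces on `Φ'`, stated for full ballots; it mentions
neither `ψ` nor the `x`- and `x'`-issues. -/
def projectedGamma (R : Issue n m → Bool) : Prop :=
  projectedGamma0 R ∨ ∃ k : Fin 3, ∀ l, R (.u k l) = true

variable {R : Issue n m → Bool}

theorem projectedGamma_congr {S : Issue n m → Bool}
    (h : restrict (Phi' n m) R = restrict (Phi' n m) S) : projectedGamma R ↔ projectedGamma S := by
  obtain ⟨hj, ha, hb, hu⟩ := restrict_Phi'_eq_iff.mp h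
  simp only [restrict] at hj ha hb hu
  simp only [projectedGamma, projectedGamma0, bigB, bigT, hj, ha, hb, hu]

theorem Gamma.projectedGamma {psi : (Fin n → Bool) → (Fin m → Bool) → Bool} (h : Gamma psi R) :
    projectedGamma R :=
  h.imp_left fun ⟨hor, hnand, hBT, _⟩ =>
    ⟨by cases ha : R .a <;> cases hb : R .b <;> simp_all, hBT⟩

/-- The modification of a full ballot that accepts all `x_i` and `x'_i` and agrees with it on `Φ'`;
for `n > 0` it falsifies `bigA`. -/
def acceptX (R : Issue n m → Bool) : Issue n m → Bool :=
  fun i => !inPhi' i || R i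

theorem restrict_acceptX (R : Issue n m → Bool) :
    restrict (Phi' n m) (acceptX R) = restrict (Phi' n m) R :=
  restrict_Phi'_eq_iff.mpr ⟨fun _ => ⟨rfl, rfl, rfl⟩, rfl, rfl, fun _ _ => rfl⟩

theorem not_bigA_acceptX (hn : 0 < n) (R : Issue n m → Bool) : ¬ bigA (acceptX R) :=
  fun h => h ⟨0, hn⟩ rfl

theorem gamma0_of_not_bigA (psi : (Fin n → Bool) → (Fin m → Bool) → Bool) (hA : ¬ bigA R)
    (h : projectedGamma0 R) : gamma0 psi R := by
  obtain ⟨hab, hBT⟩ := h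
  refine ⟨?_, ?_, hBT, fun hA' => absurd hA' hA⟩ <;>
    cases ha : R .a <;> cases hb : R .b <;> simp_all

theorem rationalOn_Phi'_restrict_iff (hn : 0 < n)
    (psi : (Fin n → Bool) → (Fin m → Bool) → Bool) :
    rationalOn psi (Phi' n m) (restrict (Phi' n m) R) ↔ projectedGamma R := by
  rw [rationalOn_iff_exists_restrict_eq]
  constructor
  · rintro ⟨S, hSR, hS⟩
    exact (projectedGamma_congr hSR).mp hS.projectedGamma
  · intro h
    have hX : projectedGamma (acceptX R) := (projectedGamma_congr (restrict_acceptX R)).mpr h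
    exact ⟨acceptX R, restrict_acceptX R,
      hX.imp_left (gamma0_of_not_bigA psi (not_bigA_acceptX hn R))⟩

/-- The number of accepted issues among `y_j`, `y'_j`, `t_j`. -/
def choiceCount (R : Issue n m → Bool) (j : Fin m) : ℕ :=
  (R (.y j)).toNat + (R (.y' j)).toNat + (R (.t j)).toNat

theorem choiceCount_eq_one_iff_of_ne {j : Fin m} (h : R (.y j) ≠ R (.y' j)) :
    choiceCount R j = 1 ↔ R (.t j) = false := by
  cases hy : R (.y j) <;> cases hy' : R (.y' j) <;> cases ht : R (.t j) <;>
    simp_all [choiceCount]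

theorem choiceCount_eq_one_iff_of_t {j : Fin m} (h : R (.t j) = true) :
    choiceCount R j = 1 ↔ R (.y j) = false ∧ R (.y' j) = false := by
  cases hy : R (.y j) <;> cases hy' : R (.y' j) <;> simp [choiceCount, *]

theorem one_le_choiceCount (h : bigB R ∨ bigT R) (j : Fin m) : 1 ≤ choiceCount R j := by
  rcases h with hB | hT
  · have hne := hB j
    cases hy : R (.y j) <;> cases hy' : R (.y' j) <;> simp_all [choiceCount]
  · simp [choiceCount, hT j]

theorem le_sum_choiceCount (h : bigB R ∨ bigT R) : m ≤ ∑ j, choiceCount R j := by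
  simpa using Finset.sum_le_sum fun j (_ : j ∈ Finset.univ) => one_le_choiceCount h j

theorem sum_choiceCount_eq_iff (h : bigB R ∨ bigT R) :
    ∑ j, choiceCount R j = m ↔ ∀ j, choiceCount R j = 1 := by
  simpa [eq_comm] using
    Finset.sum_eq_sum_iff_of_le fun j (_ : j ∈ Finset.univ) => one_le_choiceCount h j

theorem two_le_dissent_a_add_dissent_b (h : R .a ≠ R .b) :
    2 ≤ dissent (.a : Issue n m) (R .a) + dissent (.b : Issue n m) (R .b) := by
  cases ha : R .a <;> cases hb : R .b <;> simp_all [dissent_a, dissent_b]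

theorem dissent_a_add_dissent_b_eq_two_iff :
    dissent (.a : Issue n m) (R .a) + dissent (.b : Issue n m) (R .b) = 2 ↔
      R .a = true ∧ R .b = false := by
  cases R .a <;> cases R .b <;> simp [dissent_a, dissent_b]

theorem distOn_Phi'_restrict (R : Issue n m → Bool) :
    DistOn (Phi' n m) (restrict (Phi' n m) R) =
      3 * ∑ j, choiceCount R j + (dissent (.a : Issue n m) (R .a) + dissent (.b : Issue n m) (R .b))
        + (3 * (10 * n + 10 * m + 10) + ∑ k, ∑ l, (R (.u k l)).toNat) := by
  rw [distOn_restrict, sum_Phi']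
  simp only [dissent_y, dissent_y', dissent_t, dissent_u, choiceCount,
    ← Finset.mul_sum, Finset.sum_add_distrib, Finset.sum_const, Finset.card_univ,
    Fintype.card_fin, smul_eq_mul]
  ring

/-- The distance `3m + 2 + 3u` of the Kemeny outcomes, where `u = 10n + 10m + 10`. -/
def optimalDist (n m : ℕ) : ℕ :=
  3 * m + 2 + 3 * (10 * n + 10 * m + 10)

theorem optimalDist_lt_distOn_of_block {k : Fin 3} (hk : ∀ l, R (.u k l) = true) :
    optimalDist n m < DistOn (Phi' n m) (restrict (Phi' n m) R) := by
  have hblock : 10 * n + 10 * m + 10 ≤ ∑ k, ∑ l, (R (.u k l)).toNat := calc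
    10 * n + 10 * m + 10 = ∑ l, (R (.u k l)).toNat := by simp [hk]
    _ ≤ ∑ k, ∑ l, (R (.u k l)).toNat :=
      Finset.single_le_sum (f := fun k => ∑ l, (R (.u k l)).toNat)
        (fun _ _ => Nat.zero_le _) (Finset.mem_univ k)
  rw [optimalDist, distOn_Phi'_restrict]
  omega

theorem projectedGamma0.optimalDist_le_distOn (h : projectedGamma0 R) :
    optimalDist n m ≤ DistOn (Phi' n m) (restrict (Phi' n m) R) := by
  have hsum := le_sum_choiceCount h.2
  have hab := two_le_dissent_a_add_dissent_b h.1
  rw [optimalDist, distOn_Phi'_restrict]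
  omega

theorem projectedGamma0.distOn_eq_optimalDist_iff (h : projectedGamma0 R) :
    DistOn (Phi' n m) (restrict (Phi' n m) R) = optimalDist n m ↔
      (∀ j, choiceCount R j = 1) ∧ R .a = true ∧ R .b = false ∧ ∀ k l, R (.u k l) = false := by
  have hu : ∑ k, ∑ l, (R (.u k l)).toNat = 0 ↔ ∀ k l, R (.u k l) = false := by
    simp [Finset.sum_eq_zero_iff]
  have hsum_le := le_sum_choiceCount h.2
  have hab_le := two_le_dissent_a_add_dissent_b h.1
  rw [← sum_choiceCount_eq_iff h.2, ← and_assoc (a := R .a = true), ← hu,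
    ← dissent_a_add_dissent_b_eq_two_iff, distOn_Phi'_restrict, optimalDist]
  omega

theorem projectedGamma.optimalDist_le_distOn (h : projectedGamma R) :
    optimalDist n m ≤ DistOn (Phi' n m) (restrict (Phi' n m) R) := by
  rcases h with h | ⟨k, hk⟩
  · exact h.optimalDist_le_distOn
  · exact (optimalDist_lt_distOn_of_block hk).le

theorem restrict_eq_JoldZero_iff :
    restrict (Phi' n m) R = JoldZero ↔
      (bigT R ∧ ∀ j, choiceCount R j = 1) ∧
        R .a = true ∧ R .b = false ∧ ∀ k l, R (.u k l) = false := by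
  rw [restrict_Phi'_eq_iff, bigT, ← forall_and]
  refine and_congr_left' (forall_congr' fun j => ?_)
  rw [← and_assoc, and_comm]
  exact and_congr_right fun ht => (choiceCount_eq_one_iff_of_t ht).symm

theorem exists_restrict_eq_JoldBeta_iff :
    (∃ β, restrict (Phi' n m) R = JoldBeta β) ↔
      (bigB R ∧ ∀ j, choiceCount R j = 1) ∧
        R .a = true ∧ R .b = false ∧ ∀ k l, R (.u k l) = false := by
  have hj (j : Fin m) : (R (.y j) ≠ R (.y' j) ∧ choiceCount R j = 1) ↔
      R (.y' j) = !R (.y j) ∧ R (.t j) = false := by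
    rw [and_congr_right choiceCount_eq_one_iff_of_ne, Bool.eq_not, ne_comm]
  rw [bigB, ← forall_and, forall_congr' hj]
  simp only [restrict_Phi'_eq_iff]
  constructor
  · rintro ⟨β, hβ, hrest⟩
    exact ⟨fun j => ⟨by rw [(hβ j).2.1, (hβ j).1]; rfl, (hβ j).2.2⟩, hrest⟩
  · rintro ⟨hyt, hrest⟩
    exact ⟨fun j => R (.y j), fun j => ⟨rfl, hyt j⟩, hrest⟩

/-- The ballots named `J*_{old,0}` and `J*_{old,β}` in the paper, which are the Kemeny outcomes
on `Φ'`. -/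
def IsOldBallot (r : ↥(Phi' n m) → Bool) : Prop :=
  r = JoldZero ∨ ∃ β : Fin m → Bool, r = JoldBeta β

theorem isOldBallot_restrict_iff :
    IsOldBallot (restrict (Phi' n m) R) ↔
      projectedGamma0 R ∧ DistOn (Phi' n m) (restrict (Phi' n m) R) = optimalDist n m := by
  rw [and_congr_right projectedGamma0.distOn_eq_optimalDist_iff, IsOldBallot,
    restrict_eq_JoldZero_iff, exists_restrict_eq_JoldBeta_iff, ← or_and_right,
    ← or_and_right, projectedGamma0]
  constructor
  · rintro ⟨⟨hTB, hcount⟩, ha, hb, hu⟩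
    exact ⟨⟨by simp [ha, hb], hTB.symm⟩, hcount, ha, hb, hu⟩
  · rintro ⟨⟨-, hBT⟩, hcount, hrest⟩
    exact ⟨⟨hBT.symm, hcount⟩, hrest⟩

section Outcomes

variable {r : ↥(Phi' n m) → Bool}

theorem IsOldBallot.distOn_eq (h : IsOldBallot r) : DistOn (Phi' n m) r = optimalDist n m := by
  obtain ⟨R, rfl⟩ := restrict_surjective _ r
  exact (isOldBallot_restrict_iff.mp h).2

theorem isOldBallot_iff_rationalOn_and_distOn_eq (hn : 0 < n)
    (psi : (Fin n → Bool) → (Fin m → Bool) → Bool) :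
    IsOldBallot r ↔ rationalOn psi (Phi' n m) r ∧ DistOn (Phi' n m) r = optimalDist n m := by
  obtain ⟨R, rfl⟩ := restrict_surjective _ r
  rw [isOldBallot_restrict_iff, rationalOn_Phi'_restrict_iff hn]
  refine and_congr_left fun hdist => (or_iff_left ?_).symm
  rintro ⟨k, hk⟩
  exact (optimalDist_lt_distOn_of_block hk).ne' hdist

theorem IsOldBallot.kemenyOn (hn : 0 < n) (psi : (Fin n → Bool) → (Fin m → Bool) → Bool)
    (h : IsOldBallot r) : kemenyOn psi (Phi' n m) r := by
  refine ⟨((isOldBallot_iff_rationalOn_and_distOn_eq hn psi).mp h).1, fun s hs => ?_⟩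
  obtain ⟨S, rfl⟩ := restrict_surjective _ s
  rw [h.distOn_eq]
  exact ((rationalOn_Phi'_restrict_iff hn psi).mp hs).optimalDist_le_distOn

theorem kemenyOn_Phi'_iff_isOldBallot (hn : 0 < n) (psi : (Fin n → Bool) → (Fin m → Bool) → Bool) :
    kemenyOn psi (Phi' n m) r ↔ IsOldBallot r := by
  have hzero : IsOldBallot (JoldZero : ↥(Phi' n m) → Bool) := .inl rfl
  rw [kemenyOn_iff_distOn_eq (hzero.kemenyOn hn psi), hzero.distOn_eq,
    ← isOldBallot_iff_rationalOn_and_distOn_eq hn psi]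

theorem IsOldBallot.apply_b (h : IsOldBallot r) : r ⟨.b, b_mem_Phi'⟩ = false := by
  rcases h with rfl | ⟨β, rfl⟩ <;> rfl

end Outcomes

end Ctrl

open Ctrl in
/-- the Kemeny outcomes of the restricted profile J⃗|_{Φ'} are exactly
{J*_{old,0}} ∪ {J*_{old,β} : β}, each of these ballots has cumulative Hamming distance
3m + 2 + 3u to J⃗|_{Φ'}, and every Kemeny outcome of J⃗|_{Φ'} sets the issue b to false. -/
theorem ctrl_old_winners (n m : ℕ) (hn : 0 < n) (hm : 0 < m)
    (psi : (Fin n → Bool) → (Fin m → Bool) → Bool) :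
    (∀ r : ↥(Phi' n m) → Bool,
      kemenyOn psi (Phi' n m) r ↔ (r = JoldZero ∨ ∃ β : Fin m → Bool, r = JoldBeta β)) ∧
    DistOn (Phi' n m) (JoldZero : ↥(Phi' n m) → Bool)
      = 3 * m + 2 + 3 * (10 * n + 10 * m + 10) ∧
    (∀ β : Fin m → Bool, DistOn (Phi' n m) (JoldBeta β : ↥(Phi' n m) → Bool)
      = 3 * m + 2 + 3 * (10 * n + 10 * m + 10)) ∧
    (∀ r : ↥(Phi' n m) → Bool, kemenyOn psi (Phi' n m) r →
      r ⟨Issue.b, b_mem_Phi'⟩ = false) := by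
  exact ⟨fun _ => kemenyOn_Phi'_iff_isOldBallot hn psi, IsOldBallot.distOn_eq (.inl rfl),
    fun β => IsOldBallot.distOn_eq (.inr ⟨β, rfl⟩),
    fun _ hr => ((kemenyOn_Phi'_iff_isOldBallot hn psi).mp hr).apply_b⟩
end
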